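/- Let C be a class of finite groups closed under taking subgroups. Let F be a free group of rank k with basis x_1, …, x_k and let u, w ∈ F be measure equivalent in every group of C. Then for every group P in C, the number of surjective homomorphisms from the double F *_u F onto P equals the number of surjective homomorphisms from the double F *_w F onto P; in particular, the two doubles have the same quotients among groups in C. -/

import Mathlib

/-- Two words `w, u` of the free group on `α` are *measure equivalent* in a group `Q` if for
every `g : Q` the fibers of the respective word maps `(α → Q) → Q` over `g` have the same
cardinality. -/
def MeasureEquivIn {α : Type*} (w u : FreeGroup α) (Q : Type*) [Group Q] : Prop :=
  ∀ g : Q, Nat.card {f : α → Q // FreeGroup.lift f w = g} =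
    Nat.card {f : α → Q // FreeGroup.lift f u = g}

/-- The relator `u(x₁,…,x_k)·u(x̄₁,…,x̄_k)⁻¹` presenting the double `F *_u F`. -/
def doubleRel {k : ℕ} (u : FreeGroup (Fin k)) : FreeGroup (Fin k ⊕ Fin k) :=
  FreeGroup.map Sum.inl u * (FreeGroup.map Sum.inr u)⁻¹

/-- The double `F *_u F` of the free group `F` of rank `k` along the word `u`. -/
def Double {k : ℕ} (u : FreeGroup (Fin k)) : Type :=
  PresentedGroup ({doubleRel u} : Set (FreeGroup (Fin k ⊕ Fin k)))

noncomputable instance {k : ℕ} (u : FreeGroup (Fin k)) : Group (Double u) := by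
  unfold Double; infer_instance

/-!
A homomorphism from `F *_u F` to `Q` is a pair of tuples in `Q` on which `u` takes the same value,
so the number of such homomorphisms is the sum of the squares of the fibre cardinalities of the
word map of `u`, and measure equivalent words give the same number. A homomorphism into a subgroup
`H ≤ P` is a homomorphism into `P` with range contained in `H`, so both doubles have, for every
`H ≤ P`, the same number of homomorphisms to `P` with range contained in `H`. A minimal `H` for
which the numbers of homomorphisms with range exactly `H` differ cannot exist, and `H = P` gives
the count of surjections.
-/

section Fibers

variable {ι X Y : Type*}

theorem card_fiber_prodMap {ι' : Type*} (f : X → ι) (g : Y → ι') (i : ι × ι') :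
    Nat.card {x // Prod.map f g x = i} =
      Nat.card {x // f x = i.1} * Nat.card {y // g y = i.2} := by
  rw [← Nat.card_prod]
  exact Nat.card_congr <| (Equiv.subtypeEquivRight fun _ => Prod.ext_iff).trans <|
    Equiv.subtypeProdEquivProd (p := (f · = i.1)) (q := (g · = i.2))

variable [Finite X] [Finite Y]

theorem card_subtype_comp_eq_of_card_fiber_eq (f : X → ι) (g : Y → ι) (p : ι → Prop)
    (h : ∀ i, p i → Nat.card {x // f x = i} = Nat.card {y // g y = i}) :
    Nat.card {x // p (f x)} = Nat.card {y // p (g y)} :=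
  Nat.card_congr <|
    (Equiv.sigmaSubtypeFiberEquivSubtype f fun _ => Iff.rfl).symm.trans <|
    (Equiv.sigmaCongrRight fun i : Subtype p => (Finite.card_eq.mp (h i i.2)).some).trans <|
    Equiv.sigmaSubtypeFiberEquivSubtype g fun _ => Iff.rfl

theorem card_pairs_eq_of_card_fiber_eq (f : X → ι) (g : Y → ι)
    (h : ∀ i, Nat.card {x // f x = i} = Nat.card {y // g y = i}) :
    Nat.card {x : X × X // f x.1 = f x.2} = Nat.card {y : Y × Y // g y.1 = g y.2} :=
  card_subtype_comp_eq_of_card_fiber_eq (Prod.map f f) (Prod.map g g) (fun i => i.1 = i.2)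
    fun i _ => by rw [card_fiber_prodMap, card_fiber_prodMap, h, h]

variable [PartialOrder ι]

theorem card_subtype_le_eq_card_lt_add_card_fiber (f : X → ι) (i : ι) :
    Nat.card {x // f x ≤ i} = Nat.card {x // f x < i} + Nat.card {x // f x = i} := by
  classical
  rw [← Nat.card_sum]
  exact Nat.card_congr <| (Equiv.subtypeEquivRight fun _ => le_iff_lt_or_eq).trans <|
    subtypeOrEquiv _ _ <| Pi.disjoint_iff.mpr fun _ =>
      Prop.disjoint_iff.mpr fun hx => hx.1.ne hx.2

theorem card_fiber_eq_of_card_subtype_le_eq (f : X → ι) (g : Y → ι)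
    (h : ∀ i, Nat.card {x // f x ≤ i} = Nat.card {y // g y ≤ i}) (i : ι) :
    Nat.card {x // f x = i} = Nat.card {y // g y = i} := by
  let S : Set ι := {j | Nat.card {x // f x = j} ≠ Nat.card {y // g y = j}}
  have hS_subset : S ⊆ Set.range f ∪ Set.range g := fun j hj => by
    by_contra hj_notMem
    simp only [Set.mem_union, Set.mem_range, not_or, not_exists] at hj_notMem
    exact hj (by simp [hj_notMem])
  have hS_finite : S.Finite :=
    ((Set.finite_range f).union (Set.finite_range g)).subset hS_subset
  by_contra hi
  obtain ⟨m, hm⟩ := hS_finite.exists_minimal ⟨i, hi⟩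
  have h_lt : Nat.card {x // f x < m} = Nat.card {y // g y < m} :=
    card_subtype_comp_eq_of_card_fiber_eq f g (· < m) fun j hj =>
      not_not.mp fun hjS => hm.not_lt hjS hj
  have h_le := h m
  rw [card_subtype_le_eq_card_lt_add_card_fiber, card_subtype_le_eq_card_lt_add_card_fiber,
    h_lt] at h_le
  exact hm.prop (Nat.add_left_cancel h_le)

end Fibers

section Homomorphisms

variable {G G' P : Type*} [Group G] [Group G'] [Group P]

/-- Corestriction identifies the homomorphisms into a subgroup `H` of `P` with the homomorphisms
into `P` whose range is contained in `H`. -/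
def homSubgroupEquiv (H : Subgroup P) : (G →* H) ≃ {f : G →* P // f.range ≤ H} where
  toFun f := ⟨H.subtype.comp f, by rintro _ ⟨x, rfl⟩; exact (f x).2⟩
  invFun f := f.1.codRestrict H fun x => f.2 ⟨x, rfl⟩
  left_inv _ := rfl
  right_inv _ := rfl

theorem card_surjective_hom_eq_of_card_hom_subgroup_eq [Finite (G →* P)] [Finite (G' →* P)]
    (h : ∀ H : Subgroup P, Nat.card (G →* H) = Nat.card (G' →* H)) :
    Nat.card {f : G →* P // Function.Surjective f} =
      Nat.card {f : G' →* P // Function.Surjective f} := by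
  simp only [← MonoidHom.range_eq_top]
  refine card_fiber_eq_of_card_subtype_le_eq MonoidHom.range MonoidHom.range (fun H => ?_) ⊤
  rw [← Nat.card_congr (homSubgroupEquiv H), ← Nat.card_congr (homSubgroupEquiv H), h H]

end Homomorphisms

theorem freeGroup_lift_map {α β Q : Type*} [Group Q] (f : β → Q) (g : α → β) (x : FreeGroup α) :
    FreeGroup.lift f (FreeGroup.map g x) = FreeGroup.lift (f ∘ g) x :=
  FreeGroup.lift_unique ((FreeGroup.lift f).comp (FreeGroup.map g)) fun _ => by simp

/-- The universal property of a presented group: homomorphisms out of it are the assignments of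
its generators that satisfy the relations. -/
def presentedGroupHomEquiv {α : Type*} (rels : Set (FreeGroup α)) (Q : Type*) [Group Q] :
    (PresentedGroup rels →* Q) ≃ {f : α → Q // ∀ r ∈ rels, FreeGroup.lift f r = 1} where
  toFun φ := ⟨FreeGroup.lift.symm (φ.comp (PresentedGroup.mk rels)), fun r hr => by
    rw [Equiv.apply_symm_apply, MonoidHom.comp_apply, PresentedGroup.one_of_mem hr, map_one]⟩
  invFun f := PresentedGroup.toGroup f.2
  left_inv _ := PresentedGroup.ext fun _ => PresentedGroup.toGroup.of _
  right_inv f := Subtype.ext <| funext fun _ => PresentedGroup.toGroup.of f.2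

section Double

variable {k : ℕ} {Q : Type*} [Group Q]

theorem lift_doubleRel_eq_one_iff (u : FreeGroup (Fin k)) (f : Fin k ⊕ Fin k → Q) :
    FreeGroup.lift f (doubleRel u) = 1 ↔
      FreeGroup.lift (f ∘ Sum.inl) u = FreeGroup.lift (f ∘ Sum.inr) u := by
  rw [doubleRel, map_mul, map_inv, mul_inv_eq_one, freeGroup_lift_map, freeGroup_lift_map]

variable (Q) in
/-- The universal property of the double `F *_u F`: homomorphisms to `Q` are the pairs of
`k`-tuples in `Q` on which the word map of `u` agrees. -/
def doubleHomEquiv (u : FreeGroup (Fin k)) :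
    (Double u →* Q) ≃
      {p : (Fin k → Q) × (Fin k → Q) // FreeGroup.lift p.1 u = FreeGroup.lift p.2 u} :=
  (presentedGroupHomEquiv {doubleRel u} Q).trans <|
    (Equiv.sumArrowEquivProdArrow (Fin k) (Fin k) Q).subtypeEquiv fun f =>
      forall_eq.trans (lift_doubleRel_eq_one_iff u f)

instance [Finite Q] (u : FreeGroup (Fin k)) : Finite (Double u →* Q) :=
  Finite.of_equiv _ (doubleHomEquiv Q u).symm

theorem MeasureEquivIn.card_double_hom_eq [Finite Q] {u w : FreeGroup (Fin k)}
    (h : MeasureEquivIn u w Q) : Nat.card (Double u →* Q) = Nat.card (Double w →* Q) := by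
  rw [Nat.card_congr (doubleHomEquiv Q u), Nat.card_congr (doubleHomEquiv Q w)]
  exact card_pairs_eq_of_card_fiber_eq (fun f => FreeGroup.lift f u)
    (fun f => FreeGroup.lift f w) h

end Double

/-- If `u` and `w` are measure equivalent in every group of a class `C` of finite groups
closed under subgroups, then for each `P ∈ C` the doubles `F *_u F` and `F *_w F` have the
same number of surjections onto `P`; in particular they have the same quotients in `C`. -/
theorem stmt11 (C : (Q : Type) → [inst : Group Q] → Prop)
    (hCfin : ∀ (Q : Type) [Group Q], C Q → Finite Q)
    (hCsub : ∀ (Q : Type) [Group Q], C Q → ∀ H : Subgroup Q, C H)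
    (k : ℕ) (u w : FreeGroup (Fin k))
    (hme : ∀ (Q : Type) [Group Q], C Q → MeasureEquivIn u w Q)
    (P : Type) [Group P] (hP : C P) :
    Nat.card {f : Double u →* P // Function.Surjective f} =
      Nat.card {f : Double w →* P // Function.Surjective f} ∧
    ((∃ f : Double u →* P, Function.Surjective f) ↔
      (∃ f : Double w →* P, Function.Surjective f)) := by
  have := hCfin P hP
  have card_surjective_eq : Nat.card {f : Double u →* P // Function.Surjective f} =
      Nat.card {f : Double w →* P // Function.Surjective f} :=
    card_surjective_hom_eq_of_card_hom_subgroup_eq fun H =>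
      (hme H (hCsub P hP H)).card_double_hom_eq
  refine ⟨card_surjective_eq, ?_⟩
  rw [← nonempty_subtype, ← nonempty_subtype, ← Finite.card_pos_iff, ← Finite.card_pos_iff,
    card_surjective_eq]
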